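/- Weak invariance of Ω^♯: let χ be a closed covering of ℝⁿ, Ω ⊆ ℝⁿ open, V: Ω × Γ → ℝ continuous, and (x,σ) a trajectory in 𝒯_V ∩ 𝒯[χ] ∩ 𝒯_a[τ_D, N₀] such that x(t) ∈ B for all t ≥ 0 for some compact B ⊂ Ω. Then Ω^♯(x,σ) is weakly-invariant with respect to 𝒯_V* ∩ 𝒯[χ] ∩ 𝒯_a[τ_D, N₀]: for each (ξ,γ) ∈ Ω^♯(x,σ) there exists a trajectory (x*,σ*) in that class with x*(0) = ξ, σ*(0) = γ, and (x*(t), σ*(t)) ∈ Ω^♯(x,σ) for all t ≥ 0. -/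

import Mathlib

open Filter Set MeasureTheory Metric

/-- The switching times (points of left-discontinuity) of a signal `σ` on `(0,∞)`. -/
def SwitchTimes {Γ : Type*} (σ : ℝ → Γ) : Set ℝ :=
  {s | 0 < s ∧ ∀ ε > 0, ∃ u, s - ε < u ∧ u < s ∧ σ u ≠ σ s}

/-- `σ` is locally constant from the right at every time (right-continuity and
piecewise constancy from the right). -/
def RightLocConst {Γ : Type*} (σ : ℝ → Γ) : Prop :=
  ∀ s : ℝ, ∃ ε > 0, ∀ u : ℝ, s ≤ u → u < s + ε → σ u = σ s

/-- `σ` has average dwell-time `τD` and chatter bound `N₀`: the number of switching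
times in any open interval `(τ₁,τ₂) ⊆ ℝ₊` is at most `N₀ + (τ₂ - τ₁)/τD`. -/
def HasADT {Γ : Type*} (σ : ℝ → Γ) (τD : ℝ) (N₀ : ℕ) : Prop :=
  ∀ τ₁ τ₂ : ℝ, 0 ≤ τ₁ → τ₁ < τ₂ →
    (Nat.card ↥(SwitchTimes σ ∩ Set.Ioo τ₁ τ₂) : ℝ) ≤ (N₀ : ℝ) + (τ₂ - τ₁) / τD

/-- A switching signal with average dwell-time `τD > 0` and chatter bound `N₀`:
piecewise constant, right-continuous, with the average dwell-time property. -/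
def IsSwitchingSignal {Γ : Type*} (σ : ℝ → Γ) (τD : ℝ) (N₀ : ℕ) : Prop :=
  RightLocConst σ ∧ HasADT σ τD N₀
/-- A trajectory of the switched system `ẋ = f(x,σ)`: a continuous curve satisfying the
integral equation on `[0,∞)`. -/
def IsTrajectory {n m : ℕ}
    (f : EuclideanSpace ℝ (Fin n) → Fin m → EuclideanSpace ℝ (Fin n))
    (x : ℝ → EuclideanSpace ℝ (Fin n)) (σ : ℝ → Fin m) : Prop :=
  ContinuousOn x (Set.Ici 0) ∧
  ∀ t : ℝ, 0 ≤ t → x t = x 0 + ∫ s in (0:ℝ)..t, f (x s) (σ s)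

/-- The ω-limit set of `x : ℝ → ℝⁿ` (restricted to `[0,∞)`). -/
def OmegaLimit {n : ℕ} (x : ℝ → EuclideanSpace ℝ (Fin n)) : Set (EuclideanSpace ℝ (Fin n)) :=
  {ξ | ∃ s : ℕ → ℝ, StrictMono s ∧ (∀ k, 0 ≤ s k) ∧ Filter.Tendsto s Filter.atTop Filter.atTop ∧
    Filter.Tendsto (fun k => x (s k)) Filter.atTop (nhds ξ)}

/-- `τ¹_σ(t)`: the first switching time of `σ` strictly greater than `t`
(`∞`, i.e. `⊤ : EReal`, if there is none). -/
noncomputable def tau1 {Γ : Type*} (σ : ℝ → Γ) (t : ℝ) : EReal :=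
  sInf ((fun s : ℝ => (s : EReal)) '' (SwitchTimes σ ∩ Set.Ioi t))

/-- `Ω^♯(x,σ)`: the pairs `(ξ,γ)` for which there is a strictly increasing unbounded
sequence of nonnegative times `s k` with `τ¹_σ(s k) - s k → r` for some `r ∈ (0,∞]`,
`x (s k) → ξ` and `σ (s k) → γ` (eventually equal, `Γ` being discrete). -/
def OmegaSharp {n m : ℕ} (x : ℝ → EuclideanSpace ℝ (Fin n)) (σ : ℝ → Fin m) :
    Set (EuclideanSpace ℝ (Fin n) × Fin m) :=
  {p | ∃ s : ℕ → ℝ, StrictMono s ∧ (∀ k, 0 ≤ s k) ∧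
    Filter.Tendsto s Filter.atTop Filter.atTop ∧
    (∃ r : EReal, 0 < r ∧
      Filter.Tendsto (fun k => tau1 σ (s k) - ((s k : ℝ) : EReal)) Filter.atTop (nhds r)) ∧
    Filter.Tendsto (fun k => x (s k)) Filter.atTop (nhds p.1) ∧
    (∀ᶠ k in Filter.atTop, σ (s k) = p.2)}
/-- The state constraint `x(t) ∈ χ_{σ(t)}` for all `t ≥ 0` (membership in `𝒯[χ]`). -/
def InTchi {n m : ℕ} (χ : Fin m → Set (EuclideanSpace ℝ (Fin n)))
    (x : ℝ → EuclideanSpace ℝ (Fin n)) (σ : ℝ → Fin m) : Prop :=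
  ∀ t : ℝ, 0 ≤ t → x t ∈ χ (σ t)

/-- Membership in `𝒯_V`: the state stays in `Ω` and `V(x(·),σ(·))` does not increase
between times carrying the same switching index. -/
def InTV {n m : ℕ} (Ω : Set (EuclideanSpace ℝ (Fin n)))
    (V : EuclideanSpace ℝ (Fin n) → Fin m → ℝ)
    (x : ℝ → EuclideanSpace ℝ (Fin n)) (σ : ℝ → Fin m) : Prop :=
  (∀ t : ℝ, 0 ≤ t → x t ∈ Ω) ∧
  ∀ t t' : ℝ, 0 ≤ t → t ≤ t' → σ t = σ t' →
    V (x t') (σ t') ≤ V (x t) (σ t)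

/-- Membership in `𝒯_V^*`: in `𝒯_V`, and `V(x(·),σ(·))` takes equal values at any two
times carrying the same switching index. -/
def InTVstar {n m : ℕ} (Ω : Set (EuclideanSpace ℝ (Fin n)))
    (V : EuclideanSpace ℝ (Fin n) → Fin m → ℝ)
    (x : ℝ → EuclideanSpace ℝ (Fin n)) (σ : ℝ → Fin m) : Prop :=
  InTV Ω V x σ ∧
  ∀ t t' : ℝ, 0 ≤ t → 0 ≤ t' → σ t = σ t' →
    V (x t) (σ t) = V (x t') (σ t')


lemma not_switch_left {Γ : Type*} {σ : ℝ → Γ} {s : ℝ} (hs : 0 < s) (h : s ∉ SwitchTimes σ) :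
    ∃ ε > 0, ∀ u, s - ε < u → u < s → σ u = σ s := by
  simp only [SwitchTimes, mem_ofPred_eq, not_and] at h
  have := h hs
  push Not at this
  exact this

lemma right_no_switch {Γ : Type*} {σ : ℝ → Γ} {s ε : ℝ}
    (h : ∀ u : ℝ, s ≤ u → u < s + ε → σ u = σ s) {u : ℝ} (h1 : s < u) (h2 : u < s + ε) :
    u ∉ SwitchTimes σ := by
  rintro ⟨_, hu⟩
  obtain ⟨v, hv1, hv2, hv3⟩ := hu (u - s) (by linarith)
  exact hv3 (by rw [h v (by linarith) (by linarith), h u h1.le h2])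

lemma const_of_no_switch {Γ : Type*} {σ : ℝ → Γ} (hR : RightLocConst σ) {a b : ℝ} (ha : 0 ≤ a)
    (h : SwitchTimes σ ∩ Ioc a b = ∅) {u v : ℝ} (hu : u ∈ Icc a b) (hv : v ∈ Icc a b) :
    σ u = σ v := by
  let : TopologicalSpace Γ := ⊥
  have : DiscreteTopology Γ := ⟨rfl⟩
  refine isPreconnected_Icc.constant (s := Icc a b) ?_ hu hv
  intro c hc
  have : ∀ᶠ w in nhdsWithin c (Icc a b), σ w = σ c := by
    obtain ⟨ε, hε, h1⟩ := hR c
    rcases eq_or_lt_of_le hc.1 with hac | hac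
    · have : Iio (c + ε) ∈ nhds c := Iio_mem_nhds (by linarith)
      filter_upwards [self_mem_nhdsWithin, mem_nhdsWithin_of_mem_nhds this] with w hw hw2
      exact h1 w (by rw [← hac]; exact hw.1) hw2
    · have hns : c ∉ SwitchTimes σ := fun hcs => by
        have : c ∈ SwitchTimes σ ∩ Ioc a b := ⟨hcs, hac, hc.2⟩
        rw [h] at this; exact this
      obtain ⟨δ, hδ, h2⟩ := not_switch_left (by linarith) hns
      have : Ioo (c - δ) (c + ε) ∈ nhds c := Ioo_mem_nhds (by linarith) (by linarith)
      filter_upwards [mem_nhdsWithin_of_mem_nhds this] with w hw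
      rcases lt_or_ge w c with h3 | h3
      · exact h2 w hw.1 h3
      · exact h1 w h3 hw.2
  refine ContinuousWithinAt.congr_of_eventuallyEq (f := fun _ => σ c) continuousWithinAt_const this rfl

lemma switch_finite {Γ : Type*} {σ : ℝ → Γ} {τD : ℝ} (hτ : 0 < τD) {N₀ : ℕ}
    (hs : IsSwitchingSignal σ τD N₀) (b : ℝ) : (SwitchTimes σ ∩ Iic b).Finite := by
  obtain ⟨hR, hA⟩ := hs
  by_contra hb
  have key : ∀ d, (SwitchTimes σ ∩ Iic d).Finite → d < b := fun d hd => by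
    by_contra hdb
    exact hb (hd.subset fun x hx => ⟨hx.1, le_trans hx.2 (not_lt.mp hdb)⟩)
  set G := {d | (SwitchTimes σ ∩ Iic d).Finite} with hG
  have h0 : (0:ℝ) ∈ G := by
    have : SwitchTimes σ ∩ Iic 0 = ∅ := by
      ext x; simp only [mem_inter_iff, mem_Iic, mem_empty_iff_false, iff_false, not_and, not_le]
      intro hx; exact hx.1
    simp [hG, this]
  have hbdd : BddAbove G := ⟨b, fun d hd => (key d hd).le⟩
  set c := sSup G
  have hc0 : 0 ≤ c := le_csSup hbdd h0
  have hlt : ∀ d < c, (SwitchTimes σ ∩ Iic d).Finite := fun d hd => by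
    obtain ⟨e, he, hde⟩ := exists_lt_of_lt_csSup ⟨0, h0⟩ hd
    exact Set.Finite.subset he fun x hx => ⟨hx.1, le_trans hx.2 hde.le⟩
  have hfin : (SwitchTimes σ ∩ Iio c).Finite := by
    by_contra hinf
    obtain ⟨K, hK⟩ := exists_nat_gt ((N₀ : ℝ) + c / τD)
    obtain ⟨F, hF, hFc⟩ := Set.Infinite.exists_subset_card_eq hinf (K + 1)
    have hne : F.Nonempty := by rw [← Finset.card_pos]; omega
    have hm := hF (F.max'_mem hne)
    set M := F.max' hne
    have hM0 : 0 < M := hm.1.1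
    have hMc : M < c := hm.2
    have h1 := hA 0 ((M + c) / 2) le_rfl (by linarith)
    have hsub : (F : Set ℝ) ⊆ SwitchTimes σ ∩ Ioo 0 ((M + c) / 2) := fun y hy => by
      have := F.le_max' y hy
      exact ⟨(hF hy).1, (hF hy).1.1, by change y < _; linarith⟩
    have hf2 : (SwitchTimes σ ∩ Ioo 0 ((M + c) / 2)).Finite :=
      (hlt ((M + c) / 2) (by linarith)).subset fun y hy => ⟨hy.1, hy.2.2.le⟩
    have h2 := Set.ncard_le_ncard hsub hf2
    rw [Set.ncard_coe_finset, hFc] at h2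
    rw [Nat.card_coe_set_eq] at h1
    have h3 : ((K + 1 : ℕ) : ℝ) ≤ _ := (Nat.cast_le (α := ℝ)).2 h2
    have h4 : ((M + c) / 2 - 0) / τD ≤ c / τD := by gcongr; linarith
    push_cast at h3
    linarith
  obtain ⟨ε, hε, h1⟩ := hR c
  have : c + ε / 2 ∈ G := by
    refine (hfin.union (Set.finite_singleton c)).subset ?_
    rintro y ⟨hy, hy2⟩
    rcases lt_trichotomy y c with h | h | h
    · exact Or.inl ⟨hy, h⟩
    · exact Or.inr h
    · exact absurd hy (right_no_switch h1 h (by have : y ≤ _ := hy2; linarith))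
  have := le_csSup hbdd this
  linarith

lemma sig_measurable {m : ℕ} {σ : ℝ → Fin m} (hR : RightLocConst σ) : Measurable σ := by
  have hn : ∀ n : ℕ, Measurable (fun t : ℝ => σ ((⌊(n + 1 : ℝ) * t⌋ + 1) / (n + 1 : ℝ))) := fun n => by
    have h1 : Measurable (fun z : ℤ => σ (((z : ℝ) + 1) / (n + 1 : ℝ))) := measurable_from_top
    exact h1.comp (Int.measurable_floor.comp (measurable_const_mul _))
  refine measurable_of_tendsto_metrizable hn ?_
  rw [tendsto_pi_nhds]
  intro t
  obtain ⟨ε, hε, h⟩ := hR t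
  refine tendsto_const_nhds.congr' ?_
  have ht : Tendsto (fun n : ℕ => 1 / ((n : ℝ) + 1)) atTop (nhds 0) :=
    tendsto_one_div_add_atTop_nhds_zero_nat
  filter_upwards [ht.eventually (gt_mem_nhds hε)] with n hnε
  have hp : (0 : ℝ) < n + 1 := by positivity
  refine (h _ ?_ ?_).symm
  · rw [le_div_iff₀ hp]
    nlinarith [Int.lt_floor_add_one ((n + 1 : ℝ) * t)]
  · have : ((⌊(n + 1 : ℝ) * t⌋ : ℝ) + 1) / (n + 1 : ℝ) ≤ t + 1 / ((n : ℝ) + 1) := by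
      have e : (t + 1 / ((n : ℝ) + 1)) * (n + 1 : ℝ) = (n + 1 : ℝ) * t + 1 := by field_simp
      rw [div_le_iff₀ hp, e]
      linarith [Int.floor_le ((n + 1 : ℝ) * t)]
    linarith

lemma mem_sharp {n m : ℕ} {x : ℝ → EuclideanSpace ℝ (Fin n)} {σ : ℝ → Fin m}
    {η : EuclideanSpace ℝ (Fin n)} {γ : Fin m} {δ : ℝ} (hδ : 0 < δ)
    (h : ∀ ε > 0, ∀ T : ℝ, ∃ w, T ≤ w ∧ dist (x w) η < ε ∧ σ w = γ ∧
      SwitchTimes σ ∩ Ioo w (w + δ) = ∅) : (η, γ) ∈ OmegaSharp x σ := by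
  choose w hw1 hw2 hw3 hw4 using fun k : ℕ => h (1 / ((k : ℝ) + 1)) (by positivity) k
  have hw : Tendsto w atTop atTop := tendsto_atTop_mono hw1 tendsto_natCast_atTop_atTop
  obtain ⟨φ, hφ, hφ2⟩ := strictMono_subseq_of_tendsto_atTop hw
  obtain ⟨r, ψ, hψ, hr⟩ := CompactSpace.tendsto_subseq
    (fun k => tau1 σ (w (φ k)) - ((w (φ k) : ℝ) : EReal))
  have hx : Tendsto (fun k => x (w k)) atTop (nhds η) := by
    rw [tendsto_iff_dist_tendsto_zero]
    exact squeeze_zero (fun _ => dist_nonneg) (fun k => (hw2 k).le)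
      tendsto_one_div_add_atTop_nhds_zero_nat
  have hφψ : Tendsto (fun k => φ (ψ k)) atTop atTop := hφ.tendsto_atTop.comp hψ.tendsto_atTop
  refine ⟨fun k => w (φ (ψ k)), hφ2.comp hψ, fun k => ?_, hw.comp hφψ, ⟨r, ?_, hr⟩, hx.comp hφψ,
    Eventually.of_forall fun k => hw3 _⟩
  · exact le_trans (Nat.cast_nonneg _) (hw1 _)
  · have h0 : (0 : EReal) < (δ : EReal) := by exact_mod_cast hδ
    refine lt_of_lt_of_le h0 (ge_of_tendsto' hr fun k => ?_)
    have h1 : ((w (φ (ψ k)) + δ : ℝ) : EReal) ≤ tau1 σ (w (φ (ψ k))) := by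
      refine le_sInf ?_
      rintro _ ⟨u, ⟨hu1, hu2⟩, rfl⟩
      by_contra hlt
      have h3 : u < w (φ (ψ k)) + δ := EReal.coe_lt_coe_iff.1 (not_le.1 hlt)
      have : u ∈ SwitchTimes σ ∩ Ioo (w (φ (ψ k))) (w (φ (ψ k)) + δ) := ⟨hu1, hu2, h3⟩
      rw [hw4] at this; exact this
    have h2 := EReal.sub_le_sub h1 (le_refl ((w (φ (ψ k)) : ℝ) : EReal))
    refine le_trans (le_of_eq ?_) h2
    rw [← EReal.coe_sub]; congr 1; ring

lemma sharp_V_le {n m : ℕ} {Ω : Set (EuclideanSpace ℝ (Fin n))}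
    {V : EuclideanSpace ℝ (Fin n) → Fin m → ℝ}
    (hΩ : IsOpen Ω) (hV : ∀ γ : Fin m, ContinuousOn (fun ξ => V ξ γ) Ω)
    {x : ℝ → EuclideanSpace ℝ (Fin n)} {σ : ℝ → Fin m} (hTV : InTV Ω V x σ)
    {η η' : EuclideanSpace ℝ (Fin n)} {γ : Fin m}
    (h : (η, γ) ∈ OmegaSharp x σ) (h' : (η', γ) ∈ OmegaSharp x σ) (hη : η ∈ Ω) (hη' : η' ∈ Ω) :
    V η' γ ≤ V η γ := by
  obtain ⟨s, -, hs0, hsT, -, hx, hσ⟩ := h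
  obtain ⟨s', -, hs0', hsT', -, hx', hσ'⟩ := h'
  have c : Tendsto (fun k => V (x (s k)) γ) atTop (nhds (V η γ)) :=
    ((hV γ).continuousAt (hΩ.mem_nhds hη)).tendsto.comp hx
  have c' : Tendsto (fun k => V (x (s' k)) γ) atTop (nhds (V η' γ)) :=
    ((hV γ).continuousAt (hΩ.mem_nhds hη')).tendsto.comp hx'
  refine ge_of_tendsto c ?_
  filter_upwards [hσ] with k hk
  refine le_of_tendsto c' ?_
  filter_upwards [hσ', hsT'.eventually_ge_atTop (s k)] with j hj hjk
  have := hTV.2 (s k) (s' j) (hs0 k) hjk (by rw [hk, hj])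
  change σ (s k) = γ at hk
  change σ (s' j) = γ at hj
  rwa [hk, hj] at this

lemma sharp_no_switch {m : ℕ} {σ : ℝ → Fin m}
    {s : ℕ → ℝ} {r : EReal} (hr : 0 < r)
    (h : Tendsto (fun k => tau1 σ (s k) - ((s k : ℝ) : EReal)) atTop (nhds r)) :
    ∃ δ > 0, ∀ᶠ k in atTop, SwitchTimes σ ∩ Ioc (s k) (s k + δ) = ∅ := by
  obtain ⟨δ, hδ, hδr⟩ := EReal.lt_iff_exists_real_btwn.1 hr
  refine ⟨δ, by exact_mod_cast hδ, ?_⟩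
  filter_upwards [h.eventually (lt_mem_nhds hδr)] with k hk
  rw [eq_empty_iff_forall_notMem]
  rintro u ⟨hu, hu1, hu2⟩
  have h1 : tau1 σ (s k) ≤ (u : EReal) := sInf_le ⟨u, ⟨hu, hu1⟩, rfl⟩
  have h2 := EReal.sub_le_sub h1 (le_refl ((s k : ℝ) : EReal))
  have h3 := hk.trans_le h2
  rw [← EReal.coe_sub] at h3
  have : δ < u - s k := by exact_mod_cast h3
  linarith

lemma traj_facts {n m : ℕ}
    {f : EuclideanSpace ℝ (Fin n) → Fin m → EuclideanSpace ℝ (Fin n)}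
    (hf : ∀ γ : Fin m, Continuous (fun ξ => f ξ γ))
    {x : ℝ → EuclideanSpace ℝ (Fin n)} {σ : ℝ → Fin m}
    (htraj : IsTrajectory f x σ) (hR : RightLocConst σ)
    {B : Set (EuclideanSpace ℝ (Fin n))} (hB : IsCompact B)
    (hxB : ∀ t : ℝ, 0 ≤ t → x t ∈ B) :
    ∃ (y : ℝ → EuclideanSpace ℝ (Fin n)) (C : ℝ), 0 ≤ C ∧ (∀ t, 0 ≤ t → y t = x t) ∧
      (∀ t, y t ∈ B) ∧ Measurable (fun s => f (y s) (σ s)) ∧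
      (∀ t, ‖f (y t) (σ t)‖ ≤ C) ∧
      (∀ a b, 0 ≤ a → 0 ≤ b → y b = y a + ∫ s in a..b, f (y s) (σ s)) ∧
      (∀ a b, dist (y a) (y b) ≤ C * |a - b|) := by
  obtain ⟨hxc, hxi⟩ := htraj
  have hC : ∃ C : ℝ, 0 ≤ C ∧ ∀ ξ ∈ B, ∀ γ, ‖f ξ γ‖ ≤ C := by
    choose c hc using fun γ => hB.exists_bound_of_continuousOn (hf γ).continuousOn
    refine ⟨∑ γ, |c γ|, Finset.sum_nonneg fun _ _ => abs_nonneg _, fun ξ hξ γ => ?_⟩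
    exact ((hc γ ξ hξ).trans (le_abs_self _)).trans
      (Finset.single_le_sum (f := fun γ => |c γ|) (fun _ _ => abs_nonneg _) (Finset.mem_univ γ))
  obtain ⟨C, hC0, hC⟩ := hC
  set y : ℝ → EuclideanSpace ℝ (Fin n) := fun t => x (max t 0) with hy
  have hyx : ∀ t, 0 ≤ t → y t = x t := fun t ht => by simp [hy, ht]
  have hyB : ∀ t, y t ∈ B := fun t => hxB _ (le_max_right _ _)
  have hyc : Continuous y :=
    hxc.comp_continuous (by fun_prop) fun t => mem_Ici.2 (le_max_right t 0)
  have hmeas : Measurable (fun s => f (y s) (σ s)) := by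
    have h1 : Measurable (fun p : EuclideanSpace ℝ (Fin n) × Fin m => f p.1 p.2) :=
      measurable_from_prod_countable_left fun γ => (hf γ).measurable
    exact h1.comp (hyc.measurable.prodMk (sig_measurable hR))
  have hbd : ∀ t, ‖f (y t) (σ t)‖ ≤ C := fun t => hC _ (hyB t) _
  have hint : ∀ a b, IntervalIntegrable (fun s => f (y s) (σ s)) volume a b := fun a b =>
    (intervalIntegrable_const (c := C)).mono_fun hmeas.aestronglyMeasurable
      (Eventually.of_forall fun t => (hbd t).trans (le_abs_self C))
  have hyi : ∀ t, 0 ≤ t → y t = x 0 + ∫ s in (0:ℝ)..t, f (y s) (σ s) := fun t ht => by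
    rw [hyx t ht, hxi t ht]
    congr 1
    refine intervalIntegral.integral_congr fun s hs => ?_
    rw [uIcc_of_le ht] at hs
    simp only [hyx s hs.1]
  have hab : ∀ a b, 0 ≤ a → 0 ≤ b → y b = y a + ∫ s in a..b, f (y s) (σ s) := fun a b ha hb => by
    rw [hyi a ha, hyi b hb, add_assoc, intervalIntegral.integral_add_adjacent_intervals
      (hint _ _) (hint _ _)]
  refine ⟨y, C, hC0, hyx, hyB, hmeas, hbd, hab, fun a b => ?_⟩
  have e : ∀ t, y t = y (max t 0) := fun t => by simp [hy]
  rw [e a, e b, hab _ _ (le_max_right b 0) (le_max_right a 0), dist_eq_norm, add_sub_cancel_left]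
  refine (intervalIntegral.norm_integral_le_of_norm_le_const fun t _ => hbd t).trans ?_
  exact mul_le_mul_of_nonneg_left (abs_max_sub_max_le_abs a b 0) hC0

lemma extract {n m : ℕ} {σ : ℝ → Fin m} {τD : ℝ} (hτ : 0 < τD) {N₀ : ℕ}
    (hs : IsSwitchingSignal σ τD N₀) {y : ℝ → EuclideanSpace ℝ (Fin n)}
    {B : Set (EuclideanSpace ℝ (Fin n))} (hB : IsCompact B) (hy : ∀ t, y t ∈ B)
    {C : ℝ} (hC : 0 ≤ C) (hL : ∀ a b, dist (y a) (y b) ≤ C * |a - b|)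
    {s : ℕ → ℝ} (hs0 : ∀ k, 0 ≤ s k) :
    ∃ (φ : ℕ → ℕ) (N : ℚ → ℕ) (a : ℚ → Fin m) (x' : ℝ → EuclideanSpace ℝ (Fin n)),
      StrictMono φ ∧
      (∀ q : ℚ, ∀ᶠ k in atTop, (SwitchTimes σ ∩ Ioc (s (φ k)) (s (φ k) + q)).ncard = N q) ∧
      (∀ q : ℚ, ∀ᶠ k in atTop, σ (s (φ k) + q) = a q) ∧
      (∀ t, Tendsto (fun k => y (s (φ k) + t)) atTop (nhds (x' t))) := by
  have hbound : ∀ q : ℚ, ∃ K : ℕ, ∀ k,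
      (SwitchTimes σ ∩ Ioc (s k) (s k + q)).ncard ≤ K := fun q => by
    obtain ⟨K, hK⟩ := exists_nat_gt ((N₀ : ℝ) + (|(q : ℝ)| + 1) / τD)
    refine ⟨K, fun k => ?_⟩
    have h1 := hs.2 (s k) (s k + |(q : ℝ)| + 1) (hs0 k) (by linarith [abs_nonneg (q : ℝ)])
    rw [Nat.card_coe_set_eq] at h1
    have h2 : (SwitchTimes σ ∩ Ioc (s k) (s k + q)).ncard ≤
        (SwitchTimes σ ∩ Ioo (s k) (s k + |(q : ℝ)| + 1)).ncard := by
      refine Set.ncard_le_ncard (fun u hu => ⟨hu.1, hu.2.1, ?_⟩)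
        ((switch_finite hτ hs (s k + |(q : ℝ)| + 1)).subset fun u hu => ⟨hu.1, hu.2.2.le⟩)
      have h3 : u ≤ s k + q := hu.2.2
      linarith [le_abs_self (q : ℝ)]
    have h4 : ((SwitchTimes σ ∩ Ioc (s k) (s k + q)).ncard : ℝ) ≤
        (SwitchTimes σ ∩ Ioo (s k) (s k + |(q : ℝ)| + 1)).ncard := Nat.cast_le.2 h2
    have h5 : (s k + |(q : ℝ)| + 1 - s k) / τD = (|(q : ℝ)| + 1) / τD := by congr 1; ring
    rw [h5] at h1
    exact_mod_cast (h4.trans (h1.trans hK.le))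
  choose K hK using hbound
  let Z : ℕ → ℚ → ℕ × Fin m × EuclideanSpace ℝ (Fin n) := fun k q =>
    ((SwitchTimes σ ∩ Ioc (s k) (s k + q)).ncard, σ (s k + q), y (s k + q))
  have hcomp : IsCompact (Set.pi univ fun q : ℚ =>
      (Iic (K q)) ×ˢ ((univ : Set (Fin m)) ×ˢ B)) :=
    isCompact_univ_pi fun q => (Set.finite_Iic _).isCompact.prod (isCompact_univ.prod hB)
  obtain ⟨A, -, φ, hφ, hA⟩ := hcomp.tendsto_subseq (x := Z)
    fun k q _ => ⟨hK q k, mem_univ _, hy _⟩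
  rw [tendsto_pi_nhds] at hA
  have hcv : ∀ t, ∃ ξ, Tendsto (fun k => y (s (φ k) + t)) atTop (nhds ξ) := fun t => by
    refine cauchySeq_tendsto_of_complete ?_
    rw [Metric.cauchySeq_iff']
    intro ε hε
    obtain ⟨q, hq1, hq2⟩ := exists_rat_btwn (show t < t + ε / (4 * (C + 1)) by
      have : 0 < ε / (4 * (C + 1)) := by positivity
      linarith)
    have hd : ∀ k, dist (y (s (φ k) + t)) (y (s (φ k) + q)) ≤ ε / 4 := fun k => by
      refine (hL _ _).trans ?_
      have : |s (φ k) + t - (s (φ k) + q)| ≤ ε / (4 * (C + 1)) := by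
        rw [abs_le]; constructor <;> linarith
      calc C * |s (φ k) + t - (s (φ k) + q)| ≤ (C + 1) * (ε / (4 * (C + 1))) := by
            gcongr; linarith
        _ = ε / 4 := by field_simp
    have hq : CauchySeq (fun k => y (s (φ k) + q)) :=
      ((hA q).snd_nhds.snd_nhds).cauchySeq
    obtain ⟨M, hM⟩ := Metric.cauchySeq_iff'.1 hq (ε / 4) (by positivity)
    refine ⟨M, fun k hk => ?_⟩
    have h1 := hM k hk
    have h2 := hd k
    have h3 := hd M
    rw [dist_comm] at h3
    have := dist_triangle4 (y (s (φ k) + t)) (y (s (φ k) + q)) (y (s (φ M) + q)) (y (s (φ M) + t))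
    linarith
  choose x' hx' using hcv
  refine ⟨φ, fun q => (A q).1, fun q => (A q).2.1, x', hφ, fun q => ?_, fun q => ?_, hx'⟩
  · have := (hA q).fst_nhds
    rw [nhds_discrete, tendsto_pure] at this
    exact this
  · have := (hA q).snd_nhds.fst_nhds
    rw [nhds_discrete, tendsto_pure] at this
    exact this

lemma limit_signal {m : ℕ} {σ : ℝ → Fin m} {τD : ℝ} (hτ : 0 < τD) {N₀ : ℕ}
    (hs : IsSwitchingSignal σ τD N₀) {S : ℕ → ℝ} (hS0 : ∀ k, 0 ≤ S k)
    {N : ℚ → ℕ} {a : ℚ → Fin m}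
    (hN : ∀ q : ℚ, ∀ᶠ k in atTop, (SwitchTimes σ ∩ Ioc (S k) (S k + q)).ncard = N q)
    (ha : ∀ q : ℚ, ∀ᶠ k in atTop, σ (S k + q) = a q) :
    ∃ σ' : ℝ → Fin m, IsSwitchingSignal σ' τD N₀ ∧
      (∃ D : Set ℝ, D.Countable ∧ ∀ t, 0 < t → t ∉ D → ∀ᶠ k in atTop, σ (S k + t) = σ' t) ∧
      (∀ t : ℝ, 0 ≤ t → ∃ q₁ : ℚ, t < q₁ ∧ σ' t = a q₁ ∧ ∀ q : ℚ, t < q → q < q₁ →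
        ∀ᶠ k in atTop, SwitchTimes σ ∩ Ioc (S k + q) (S k + q₁) = ∅) ∧
      (∀ q : ℚ, 0 < q → N q = 0 → σ' 0 = a q) := by
  have hR := hs.1
  have hfin : ∀ u v : ℝ, (SwitchTimes σ ∩ Ioc u v).Finite := fun u v =>
    (switch_finite hτ hs v).subset fun w hw => ⟨hw.1, hw.2.2⟩
  have hNmono : Monotone N := fun q q' hqq => by
    obtain ⟨k, hk, hk'⟩ := ((hN q).and (hN q')).exists
    rw [← hk, ← hk']
    refine Set.ncard_le_ncard (fun u hu => ⟨hu.1, hu.2.1, hu.2.2.trans ?_⟩) (hfin _ _)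
    have : (q : ℝ) ≤ q' := by exact_mod_cast hqq
    linarith
  -- splitting the count
  have hsplit : ∀ q q' : ℚ, 0 ≤ q → q ≤ q' → ∀ᶠ k in atTop,
      N q + (SwitchTimes σ ∩ Ioc (S k + q) (S k + q')).ncard = N q' := fun q q' h0 hqq => by
    filter_upwards [hN q, hN q'] with k hk hk'
    have h0' : (0 : ℝ) ≤ q := by exact_mod_cast h0
    have hqq' : (q : ℝ) ≤ q' := by exact_mod_cast hqq
    rw [← hk, ← hk', ← Set.ncard_union_eq ?_ (hfin _ _) (hfin _ _), ← inter_union_distrib_left,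
      Ioc_union_Ioc_eq_Ioc (by linarith) (by linarith)]
    rw [Set.disjoint_left]
    intro u hu hu'
    exact absurd hu.2.2 (not_le.2 hu'.2.1)
  have hempty : ∀ q q' : ℚ, 0 ≤ q → q ≤ q' → N q = N q' → ∀ᶠ k in atTop,
      SwitchTimes σ ∩ Ioc (S k + q) (S k + q') = ∅ := fun q q' h0 hqq he => by
    filter_upwards [hsplit q q' h0 hqq] with k hk
    rw [← Set.ncard_eq_zero (hfin _ _)]
    omega
  have haeq : ∀ q q' : ℚ, 0 ≤ q → q ≤ q' → N q = N q' → a q = a q' := fun q q' h0 hqq he => by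
    obtain ⟨k, hk1, hk2, hk3⟩ := ((hempty q q' h0 hqq he).and ((ha q).and (ha q'))).exists
    rw [← hk2, ← hk3]
    have h0' : (0 : ℝ) ≤ q := by exact_mod_cast h0
    have hqq' : (q : ℝ) ≤ q' := by exact_mod_cast hqq
    refine const_of_no_switch hR (by linarith [hS0 k]) hk1 ⟨le_rfl, by linarith⟩ ⟨by linarith, le_rfl⟩
  -- the limiting counting function
  let M : ℝ → ℕ := fun t => sInf (N '' {q : ℚ | t < q})
  have hMle : ∀ (t : ℝ) (q : ℚ), t < q → M t ≤ N q := fun t q hq => Nat.sInf_le ⟨q, hq, rfl⟩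
  have hMex : ∀ t : ℝ, ∃ q : ℚ, t < q ∧ N q = M t := fun t => by
    obtain ⟨q, hq⟩ := exists_rat_gt t
    obtain ⟨q', h1, h2⟩ := Nat.sInf_mem (s := N '' {q : ℚ | t < q}) ⟨_, q, hq, rfl⟩
    exact ⟨q', h1, h2⟩
  have hMmono : Monotone M := fun t u htu => by
    obtain ⟨q, hq, hq2⟩ := hMex u
    rw [← hq2]; exact hMle t q (htu.trans_lt hq)
  have hNM : ∀ q : ℚ, N q ≤ M q := fun q => by
    obtain ⟨q', hq, hq2⟩ := hMex q
    rw [← hq2]; exact hNmono (by exact_mod_cast hq.le)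
  choose c hc1 hc2 using hMex
  let σ' : ℝ → Fin m := fun t => a (c (max t 0))
  have hσ' : ∀ t, 0 ≤ t → σ' t = a (c t) := fun t ht => by simp [σ', ht]
  have agree : ∀ (t : ℝ) (q : ℚ), 0 ≤ t → t < q → N q = M t → σ' t = a q := fun t q ht hq he => by
    rw [hσ' t ht]
    have hq0 : (0 : ℝ) < q := by linarith
    have hc0 : (0 : ℝ) < c t := by linarith [hc1 t]
    have hq0 : 0 < q := by exact_mod_cast hq0
    have hc0 : 0 < c t := by exact_mod_cast hc0
    rcases le_total q (c t) with h | h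
    · exact (haeq _ _ hq0.le h (by rw [he, hc2])).symm
    · exact (haeq _ _ hc0.le h (by rw [he, hc2]))
  have hMconst : ∀ t u : ℝ, t ≤ u → u < c t → M u = M t := fun t u htu hu =>
    le_antisymm (by rw [← hc2 t]; exact hMle _ _ hu) (hMmono htu)
  have hjump : ∀ t ∈ SwitchTimes σ', ∀ u < t, M u < M t := fun t ht u hu => by
    by_contra hcon
    have he : ∀ v, u ≤ v → v ≤ t → M v = M t := fun v h1 h2 =>
      le_antisymm (hMmono h2) ((not_lt.1 hcon).trans (hMmono h1))
    obtain ⟨v, hv1, hv2, hv3⟩ := ht.2 (min (t - u) t) (lt_min (by linarith) ht.1)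
    have hv0 : 0 ≤ v := by linarith [min_le_right (t - u) t]
    have hvu : u ≤ v := by linarith [min_le_left (t - u) t]
    refine hv3 ?_
    rw [agree v (c t) hv0 (hv2.trans (hc1 t)) (by rw [hc2, he v hvu hv2.le]), hσ' t ht.1.le]
  refine ⟨σ', ⟨fun t => ?_, ?_⟩, ⟨{t | ¬ ContinuousAt M t}, hMmono.countable_not_continuousAt, ?_⟩,
    ?_, ?_⟩
  · rcases lt_or_ge t 0 with ht | ht
    · refine ⟨-t, by linarith, fun u _ hu => ?_⟩
      simp only [σ']
      rw [max_eq_right ht.le, max_eq_right (by linarith)]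
    · refine ⟨c t - t, by linarith [hc1 t], fun u h1 h2 => ?_⟩
      rw [agree u (c t) (ht.trans h1) (by linarith) (by rw [hc2, hMconst t u h1 (by linarith)]),
        hσ' t ht]
  · intro τ₁ τ₂ h0 hτ12
    rw [Nat.card_coe_set_eq]
    have hpos : (0 : ℝ) ≤ (N₀ : ℝ) + (τ₂ - τ₁) / τD :=
      add_nonneg (Nat.cast_nonneg _) (div_nonneg (by linarith) hτ.le)
    set F := SwitchTimes σ' ∩ Ioo τ₁ τ₂ with hF
    rcases Set.infinite_or_finite F with hinf | hff
    · rw [hinf.ncard]; simpa using hpos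
    rcases F.eq_empty_or_nonempty with hemp | hne
    · rw [hemp]; simpa using hpos
    obtain ⟨b, hbF, hb⟩ := Set.exists_max_image F id hff hne
    obtain ⟨l, hlF, hl⟩ := Set.exists_min_image F id hff hne
    simp only [id] at hb hl
    obtain ⟨q, hq1, hq2⟩ := exists_rat_btwn hlF.2.1
    have hbm : b < min τ₂ (c b) := lt_min hbF.2.2 (hc1 b)
    obtain ⟨q', hq1', hq2'⟩ := exists_rat_btwn hbm
    have hlb : l ≤ b := hb l hlF
    have hqq : q ≤ q' := by
      have : (q : ℝ) ≤ q' := by linarith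
      exact_mod_cast this
    have hq0 : 0 ≤ q := by
      have : (0 : ℝ) ≤ q := by linarith
      exact_mod_cast this
    have hcard : F.ncard ≤ N q' - N q := by
      have hmaps : ∀ t ∈ F, M t ∈ ((Finset.Ioc (M q) (M b) : Finset ℕ) : Set ℕ) := fun t ht => by
        simp only [Finset.coe_Ioc, mem_Ioc]
        exact ⟨hjump t ht.1 q (hq2.trans_le (hl t ht)), hMmono (hb t ht)⟩
      have hinj : Set.InjOn M F := by
        intro t ht u hu he
        rcases lt_trichotomy t u with h | h | h
        · exact absurd he (hjump u hu.1 t h).ne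
        · exact h
        · exact absurd he (hjump t ht.1 u h).ne'
      have h1 := Set.ncard_le_ncard_of_injOn M hmaps hinj (Finset.finite_toSet _)
      rw [Set.ncard_coe_finset, Nat.card_Ioc] at h1
      have h2 := hNM q
      have h3 := hMle b q' hq1'
      omega
    obtain ⟨k, hk⟩ := (hsplit q q' hq0 hqq).exists
    have h1 := hs.2 (S k + τ₁) (S k + τ₂) (by linarith [hS0 k]) (by linarith)
    rw [Nat.card_coe_set_eq, show S k + τ₂ - (S k + τ₁) = τ₂ - τ₁ by ring] at h1
    refine le_trans ?_ h1
    rw [Nat.cast_le]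
    have h2 : (SwitchTimes σ ∩ Ioc (S k + q) (S k + q')).ncard ≤
        (SwitchTimes σ ∩ Ioo (S k + τ₁) (S k + τ₂)).ncard := by
      refine Set.ncard_le_ncard (fun u hu => ⟨hu.1, ?_, ?_⟩)
        ((switch_finite hτ hs (S k + τ₂)).subset fun u hu => ⟨hu.1, hu.2.2.le⟩)
      · have : S k + q < u := hu.2.1
        linarith
      · have : u ≤ S k + q' := hu.2.2
        have := hq2'.trans_le (min_le_left _ _)
        linarith
    omega
  · intro t ht hD
    have hcont : ContinuousAt M t := by
      by_contra h; exact hD h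
    have hev : ∀ᶠ u in nhds t, M u = M t := by
      have := hcont.tendsto
      rwa [nhds_discrete ℕ, tendsto_pure] at this
    obtain ⟨ε, hε, hball⟩ := Metric.eventually_nhds_iff.1 hev
    obtain ⟨q, hq1, hq2⟩ := exists_rat_btwn (show max (t - ε / 2) 0 < t from max_lt (by linarith) ht)
    have hq0 : (0 : ℝ) < q := (le_max_right _ _).trans_lt hq1
    have hq0' : 0 < q := by exact_mod_cast hq0
    have hMq : M (t - ε / 2) = M t := hball (by
      rw [Real.dist_eq, abs_lt]; constructor <;> linarith)
    have h1 : M t ≤ N q := by rw [← hMq]; exact hMle _ _ ((le_max_left _ _).trans_lt hq1)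
    have hqc : (q : ℝ) < c t := hq2.trans (hc1 t)
    have hqc' : q ≤ c t := by exact_mod_cast hqc.le
    have h2 : N q = N (c t) := le_antisymm (hNmono hqc') (by rw [hc2]; exact h1)
    filter_upwards [hempty q (c t) hq0'.le hqc' h2, ha (c t)] with k hk1 hk2
    rw [hσ' t ht.le, ← hk2]
    exact const_of_no_switch hR (by linarith [hS0 k]) hk1 ⟨by linarith, by linarith [hc1 t]⟩
      ⟨by linarith, le_rfl⟩
  · intro t ht
    refine ⟨c t, hc1 t, hσ' t ht, fun q h1 h2 => ?_⟩
    have hq0 : (0 : ℝ) ≤ q := by linarith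
    refine hempty q (c t) (by exact_mod_cast hq0) h2.le
      (le_antisymm (hNmono h2.le) ?_)
    rw [hc2]; exact hMle _ _ h1
  · intro q hq hq0
    have hq' : (0 : ℝ) < q := by exact_mod_cast hq
    refine agree 0 q le_rfl hq' ?_
    have := hMle 0 q hq'
    omega

/-- weak invariance of `Ω^♯`: if `χ` is a closed covering of `ℝⁿ`,
`V : Ω × Γ → ℝ` is continuous (`Ω ⊆ ℝⁿ` open), and `(x,σ)` is a trajectory in
`𝒯_V ∩ 𝒯[χ] ∩ 𝒯_a[τD,N₀]` evolving in a compact `B ⊂ Ω`, then `Ω^♯(x,σ)` is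
weakly-invariant with respect to `𝒯_V^* ∩ 𝒯[χ] ∩ 𝒯_a[τD,N₀]`. -/
theorem stmt11 {n m : ℕ}
    (f : EuclideanSpace ℝ (Fin n) → Fin m → EuclideanSpace ℝ (Fin n))
    (hf : ∀ γ : Fin m, Continuous (fun ξ => f ξ γ))
    (χ : Fin m → Set (EuclideanSpace ℝ (Fin n)))
    (hχcl : ∀ γ, IsClosed (χ γ)) (hχcov : (⋃ γ, χ γ) = Set.univ)
    (Ω : Set (EuclideanSpace ℝ (Fin n))) (hΩ : IsOpen Ω)
    (V : EuclideanSpace ℝ (Fin n) → Fin m → ℝ)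
    (hV : ∀ γ : Fin m, ContinuousOn (fun ξ => V ξ γ) Ω)
    (τD : ℝ) (hτ : 0 < τD) (N₀ : ℕ)
    (x : ℝ → EuclideanSpace ℝ (Fin n)) (σ : ℝ → Fin m)
    (htraj : IsTrajectory f x σ) (hsig : IsSwitchingSignal σ τD N₀)
    (hchi : InTchi χ x σ) (hTV : InTV Ω V x σ)
    (B : Set (EuclideanSpace ℝ (Fin n))) (hB : IsCompact B) (hBΩ : B ⊆ Ω)
    (hxB : ∀ t : ℝ, 0 ≤ t → x t ∈ B) :
    ∀ p ∈ OmegaSharp x σ,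
      ∃ x' : ℝ → EuclideanSpace ℝ (Fin n), ∃ σ' : ℝ → Fin m,
        IsTrajectory f x' σ' ∧ IsSwitchingSignal σ' τD N₀ ∧
        InTchi χ x' σ' ∧ InTVstar Ω V x' σ' ∧
        x' 0 = p.1 ∧ σ' 0 = p.2 ∧
        ∀ t : ℝ, 0 ≤ t → (x' t, σ' t) ∈ OmegaSharp x σ := by
  rintro ⟨ξ, γ⟩ ⟨s, -, hs0, hsT, ⟨r, hr, hrT⟩, hsx, hsσ⟩
  obtain ⟨y, C, hC0, hyx, hyB, hmeas, hbd, hab, hL⟩ := traj_facts hf htraj hsig.1 hB hxB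
  obtain ⟨φ, N, a, x', hφ, hN, ha, hx'⟩ := extract hτ hsig hB hyB hC0 hL hs0
  obtain ⟨σ', hσ', ⟨D, hD, hconv⟩, hright, hinit⟩ :=
    limit_signal hτ hsig (S := fun k => s (φ k)) (fun k => hs0 _) hN ha
  have hφT := hφ.tendsto_atTop
  have hST : Tendsto (fun k => s (φ k)) atTop atTop := hsT.comp hφT
  have hx'L : ∀ t u, dist (x' t) (x' u) ≤ C * |t - u| := fun t u => by
    refine le_of_tendsto ((hx' t).dist (hx' u)) (Eventually.of_forall fun k => ?_)
    refine (hL _ _).trans (le_of_eq ?_)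
    congr 2; ring
  have hx'c : Continuous x' := (LipschitzWith.of_dist_le_mul (K := ⟨C, hC0⟩) fun t u => by
    rw [Real.dist_eq]; exact hx'L t u).continuous
  have hsharp : ∀ t, 0 ≤ t → (x' t, σ' t) ∈ OmegaSharp x σ := fun t ht => by
    obtain ⟨q₁, hq₁, hσq, hno⟩ := hright t ht
    refine mem_sharp (δ := (q₁ - t) / 2) (by linarith) fun ε hε T => ?_
    have hpos : 0 < ε / (2 * (C + 1)) := by positivity
    obtain ⟨q, hq1, hq2⟩ := exists_rat_btwn
      (show t < min (t + (q₁ - t) / 2) (t + ε / (2 * (C + 1))) from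
        lt_min (by linarith) (by linarith))
    have hqa := hq2.trans_le (min_le_left _ _)
    have hqb := hq2.trans_le (min_le_right _ _)
    have hqq : (q : ℝ) < q₁ := by linarith
    have hev := (hx' t).eventually (Metric.ball_mem_nhds _ (half_pos hε))
    obtain ⟨k, hk1, hk2, hk3, hk4⟩ := ((hno q hq1 (by exact_mod_cast hqq)).and
      ((ha q₁).and (hev.and (hST.eventually_ge_atTop T)))).exists
    have hsk := hs0 (φ k)
    refine ⟨s (φ k) + q, by linarith, ?_, ?_, ?_⟩
    · rw [← hyx _ (by linarith)]
      have h1 : dist (y (s (φ k) + t)) (x' t) < ε / 2 := hk3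
      have h2 : dist (y (s (φ k) + q)) (y (s (φ k) + t)) ≤ ε / 2 := by
        refine (hL _ _).trans ?_
        have : |s (φ k) + q - (s (φ k) + t)| ≤ ε / (2 * (C + 1)) := by
          rw [abs_le]; constructor <;> linarith
        calc C * |s (φ k) + q - (s (φ k) + t)| ≤ (C + 1) * (ε / (2 * (C + 1))) := by
              gcongr; linarith
          _ = ε / 2 := by field_simp
      linarith [dist_triangle (y (s (φ k) + q)) (y (s (φ k) + t)) (x' t)]
    · rw [hσq, ← hk2]
      exact const_of_no_switch hsig.1 (by linarith) hk1 ⟨le_rfl, by linarith⟩ ⟨by linarith, le_rfl⟩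
    · rw [eq_empty_iff_forall_notMem]
      rintro u ⟨hu, hu1, hu2⟩
      have : u ∈ SwitchTimes σ ∩ Ioc (s (φ k) + q) (s (φ k) + q₁) := ⟨hu, hu1, by linarith⟩
      rw [hk1] at this; exact this
  have hx'B : ∀ t, x' t ∈ B := fun t =>
    hB.isClosed.mem_of_tendsto (hx' t) (Eventually.of_forall fun k => hyB _)
  have hx'Ω : ∀ t, x' t ∈ Ω := fun t => hBΩ (hx'B t)
  have hVeq : ∀ t t' : ℝ, 0 ≤ t → 0 ≤ t' → σ' t = σ' t' →
      V (x' t) (σ' t) = V (x' t') (σ' t') := fun t t' ht ht' he => by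
    have h1 := hsharp t ht
    have h2 := hsharp t' ht'
    rw [← he] at h2 ⊢
    exact le_antisymm (sharp_V_le hΩ hV hTV h2 h1 (hx'Ω _) (hx'Ω _))
      (sharp_V_le hΩ hV hTV h1 h2 (hx'Ω _) (hx'Ω _))
  refine ⟨x', σ', ⟨hx'c.continuousOn, fun t ht => ?_⟩, hσ', fun t ht => ?_,
    ⟨⟨fun t _ => hx'Ω t, fun t t' ht htt he => (hVeq t t' ht (ht.trans htt) he).ge⟩, hVeq⟩,
    ?_, ?_, hsharp⟩
  · have h1 : Tendsto (fun k => ∫ u in (0:ℝ)..t, f (y (s (φ k) + u)) (σ (s (φ k) + u))) atTop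
        (nhds (∫ u in (0:ℝ)..t, f (x' u) (σ' u))) := by
      refine intervalIntegral.tendsto_integral_filter_of_dominated_convergence (fun _ => C)
        (Eventually.of_forall fun k =>
          (hmeas.comp (measurable_const_add (s (φ k)))).aestronglyMeasurable)
        (Eventually.of_forall fun k => Eventually.of_forall fun u _ => hbd _)
        intervalIntegrable_const ?_
      have hae : ∀ᵐ u ∂(volume : Measure ℝ), u ∉ D := by
        exact measure_eq_zero_iff_ae_notMem.1 (hD.measure_zero _)
      filter_upwards [hae] with u hu hut
      rw [uIoc_of_le ht] at hut
      have h2 := ((hf (σ' u)).tendsto (x' u)).comp (hx' u)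
      refine h2.congr' ?_
      filter_upwards [hconv u hut.1 hu] with k hk
      simp only [Function.comp, hk]
    have h2 := (hx' 0).add h1
    refine tendsto_nhds_unique (hx' t) (h2.congr fun k => ?_)
    have hsk := hs0 (φ k)
    rw [hab (s (φ k) + 0) (s (φ k) + t) (by linarith) (by linarith),
      intervalIntegral.integral_comp_add_left (fun u => f (y u) (σ u))]
  · obtain ⟨w, -, hw0, -, -, hwx, hwσ⟩ := hsharp t ht
    refine (hχcl (σ' t)).mem_of_tendsto hwx ?_
    filter_upwards [hwσ] with k hk
    have := hchi (w k) (hw0 k)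
    rwa [hk] at this
  · refine tendsto_nhds_unique (hx' 0) ((hsx.comp hφT).congr fun k => ?_)
    simp [hyx _ (hs0 (φ k))]
  · obtain ⟨δ, hδ, hno⟩ := sharp_no_switch hr hrT
    obtain ⟨q, hq1, hq2⟩ := exists_rat_btwn hδ
    have hq0 : 0 < q := by exact_mod_cast hq1
    obtain ⟨k, hk1, hk2, hk3, hk4⟩ := ((hφT.eventually hno).and
      ((hφT.eventually hsσ).and ((hN q).and (ha q)))).exists
    have he : SwitchTimes σ ∩ Ioc (s (φ k)) (s (φ k) + q) = ∅ := by
      rw [eq_empty_iff_forall_notMem]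
      rintro u ⟨hu, hu1, hu2⟩
      have : u ∈ SwitchTimes σ ∩ Ioc (s (φ k)) (s (φ k) + δ) := ⟨hu, hu1, by linarith⟩
      rw [hk1] at this; exact this
    rw [he, Set.ncard_empty] at hk3
    rw [hinit q hq0 hk3.symm, ← hk4]
    change _ = γ
    rw [← show σ (s (φ k)) = γ from hk2]
    exact const_of_no_switch hsig.1 (hs0 _) he ⟨by linarith, le_rfl⟩ ⟨le_rfl, by linarith⟩
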